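/- arXiv:1505.02258 — 3 statements merged into one kernel-verified Lean document; each statement's English description precedes it below -/
import Mathlib

section
/- Lemma 3.2 (bilinear collision estimate). For each Maxwellian M = M_{[ρ,u,θ]} (ρ, θ > 0, u ∈ ℝ³) there exists a positive constant C > 0 such that for all functions f, g : ℝ³ → ℝ for which the integrals below are finite, ∫_{ℝ³} ν(ξ)^{−1} Q(f,g)(ξ)² / M(ξ) dξ ≤ C { (∫_{ℝ³} ν(ξ) f(ξ)²/M(ξ) dξ) · (∫_{ℝ³} g(ξ)²/M(ξ) dξ) + (∫_{ℝ³} f(ξ)²/M(ξ) dξ) · (∫_{ℝ³} ν(ξ) g(ξ)²/M(ξ) dξ) }. -/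
/-!
Write `f = F √M`, `g = G √M`. Since `M(ξ') M(ξ'_*) = M(ξ) M(ξ_*)` by conservation of energy,
`|Q(f,g)(ξ)|` is at most `√M(ξ)` times the integral over `(ξ_*, Ω)` of
`√M(ξ_*) ((ξ - ξ_*)·Ω)₊` times the four products `|F G|` (`enorm_Qop_le`). By Cauchy–Schwarz its
square is bounded by `M(ξ)` times the collision frequency of `M` times
`∫∫ (sum of the four products)² |(ξ - ξ_*)·Ω|`. All Maxwellians have comparable collision
frequencies (`exists_freqM_le`), so the factor `ν⁻¹ / M` cancels the first two
(`pointwise_bound`).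

On integrating over `ξ`, the maps `(ξ, ξ_*) ↦ (ξ', ξ'_*)` (a linear involution, hence of
determinant `±1`) and `(ξ, ξ_*) ↦ (ξ_*, ξ)` preserve Lebesgue measure and the kernel, which reduces
the four squares to `∫∫ F(ξ)² G(ξ_*)² ‖ξ - ξ_*‖`. The triangle inequality averaged against the
standard Maxwellian gives `‖ξ - ξ_*‖ ≲ ∫ M₁(z) ‖ξ - z‖ dz + ∫ M₁(z) ‖ξ_* - z‖ dz`
(`dist_le_freq`), and rotation invariance of surface measure identifies the right side with a
multiple of `ν(ξ) + ν(ξ_*)` (`crossSec_eq`, `ofReal_collFreq`); see `lintegral_quad_le`.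

All estimates are made with `[0, ∞]`-valued integrals. As `f` and `g` are not assumed measurable,
`|f|/√M` and `|g|/√M` are replaced by measurable everywhere-majorants equal to them almost
everywhere (`exists_majorant`). The only fact about the size of the sphere that is needed is that its
Hausdorff measure is finite; if it were zero, both sides would vanish.
-/


noncomputable section

open MeasureTheory Real Filter Topology Set
open scoped RealInnerProductSpace Classical

abbrev E3 : Type := EuclideanSpace ℝ (Fin 3)

/-- The Maxwellian `M_{[ρ,u,θ]}` with gas constant `R`. -/
def maxwellian (R ρ θ : ℝ) (u ξ : E3) : ℝ :=
  (ρ / Real.sqrt ((2 * Real.pi * R * θ) ^ 3)) * Real.exp (-‖ξ - u‖ ^ 2 / (2 * R * θ))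

/-- The hard-sphere Boltzmann collision operator `Q(f,g)`. -/
def Qop (f g : E3 → ℝ) (ξ : E3) : ℝ :=
  (1 / 2) * ∫ ξs : E3, (∫ Ω in Metric.sphere (0 : E3) 1,
    (if 0 ≤ ⟪ξ - ξs, Ω⟫ then
        (f (ξ - ⟪ξ - ξs, Ω⟫ • Ω) * g (ξs + ⟪ξ - ξs, Ω⟫ • Ω)
          + f (ξs + ⟪ξ - ξs, Ω⟫ • Ω) * g (ξ - ⟪ξ - ξs, Ω⟫ • Ω)
          - f ξ * g ξs - f ξs * g ξ) * |⟪ξ - ξs, Ω⟫|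
      else 0) ∂μH[2])

/-- The hard-sphere collision frequency `ν(ξ)`. -/
def collFreq (ξ : E3) : ℝ :=
  ∫ ξs : E3, (∫ Ω in Metric.sphere (0 : E3) 1,
    (if 0 ≤ ⟪ξ - ξs, Ω⟫ then maxwellian 1 1 1 0 ξs * |⟪ξ - ξs, Ω⟫| else 0) ∂μH[2])

/-- The five collision invariants `ψ_j`. -/
def collInv (j : Fin 5) (ξ : E3) : ℝ :=
  if j.val = 0 then 1
  else if j.val = 1 then ξ 0
  else if j.val = 2 then ξ 1
  else if j.val = 3 then ξ 2
  else ‖ξ‖ ^ 2 / 2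

/-- A function of `ξ` is microscopic if it is orthogonal to all collision invariants. -/
def IsMicroscopic (h : E3 → ℝ) : Prop :=
  ∀ j : Fin 5, (∫ ξ : E3, collInv j ξ * h ξ) = 0

/-- The linearized collision operator `L_M h = Q(M,h) + Q(h,M)`. -/
def LM (M h : E3 → ℝ) (ξ : E3) : ℝ := Qop M h ξ + Qop h M ξ

/-- The orthonormal basis `χ_j` of the macroscopic space associated with `M_{[ρ,u,θ]}`. -/
def chi (R ρ θ : ℝ) (u : E3) (j : Fin 5) (ξ : E3) : ℝ :=
  if j.val = 0 then maxwellian R ρ θ u ξ / Real.sqrt ρ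
  else if j.val = 1 then ((ξ 0 - u 0) / Real.sqrt (R * θ * ρ)) * maxwellian R ρ θ u ξ
  else if j.val = 2 then ((ξ 1 - u 1) / Real.sqrt (R * θ * ρ)) * maxwellian R ρ θ u ξ
  else if j.val = 3 then ((ξ 2 - u 2) / Real.sqrt (R * θ * ρ)) * maxwellian R ρ θ u ξ
  else (1 / Real.sqrt (6 * ρ)) * (‖ξ - u‖ ^ 2 / (R * θ) - 3) * maxwellian R ρ θ u ξ

/-- The microscopic projection `P₁` associated with the Maxwellian `M_{[ρ,u,θ]}`. -/
def P1 (R ρ θ : ℝ) (u : E3) (h : E3 → ℝ) (ξ : E3) : ℝ :=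
  h ξ - ∑ j : Fin 5, (∫ ζ : E3, h ζ * chi R ρ θ u j ζ / maxwellian R ρ θ u ζ) * chi R ρ θ u j ξ

/-- Build a vector in `E3` from three real coordinates. -/
def vec3 (x y z : ℝ) : E3 := (WithLp.equiv 2 (Fin 3 → ℝ)).symm ![x, y, z]

/-! ### Surface measure on the unit sphere -/

/-- Surface measure on the unit sphere, as a measure on the ambient space. -/
def sphMeas : Measure E3 := (μH[2] : Measure E3).restrict (Metric.sphere 0 1)

/-- Spherical coordinates exhibit the sphere as a Lipschitz image of a bounded square. -/
lemma hausdorff_sphere_lt_top : (μH[2] : Measure E3) (Metric.sphere 0 1) < ⊤ := by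
  let Φ : (Fin 2 → ℝ) → E3 := fun p =>
    !₂[Real.sin (p 0) * Real.cos (p 1), Real.sin (p 0) * Real.sin (p 1), Real.cos (p 0)]
  let S : Set (Fin 2 → ℝ) := Icc (fun _ => -4) (fun _ => 4)
  have hΦ : ContDiff ℝ 1 Φ := by
    rw [contDiff_euclidean]
    intro i
    fin_cases i <;> simp [Φ] <;> fun_prop
  obtain ⟨K, hK⟩ := hΦ.contDiffOn.exists_lipschitzOnWith (s := S) one_ne_zero
    (convex_Icc _ _) isCompact_Icc
  have hsub : Metric.sphere (0 : E3) 1 ⊆ Φ '' S := by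
    intro x hx
    have hx1 : x 0 ^ 2 + x 1 ^ 2 + x 2 ^ 2 = 1 := by
      have h := EuclideanSpace.real_norm_sq_eq x
      rw [mem_sphere_zero_iff_norm.1 hx] at h
      simp [Fin.sum_univ_three] at h
      linarith
    set z : ℂ := ⟨x 0, x 1⟩ with hz
    have hzn : Real.sin (Real.arccos (x 2)) = ‖z‖ := by
      rw [Real.sin_arccos, Complex.norm_eq_sqrt_sq_add_sq]
      congr 1
      simp [hz]; linarith
    have hpi := Real.pi_lt_four
    refine ⟨![Real.arccos (x 2), z.arg], ⟨?_, ?_⟩, ?_⟩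
    · intro i
      have := Complex.neg_pi_lt_arg z
      have := Real.arccos_nonneg (x 2)
      fin_cases i <;> simp <;> linarith
    · intro i
      have := Complex.arg_le_pi z
      have := Real.arccos_le_pi (x 2)
      fin_cases i <;> simp <;> linarith
    · ext i
      fin_cases i
      · simp [Φ, hzn, Complex.norm_mul_cos_arg]; simp [hz]
      · simp [Φ, hzn, Complex.norm_mul_sin_arg]; simp [hz]
      · simp [Φ]
        rw [Real.cos_arccos] <;> nlinarith [sq_nonneg (x 0), sq_nonneg (x 1)]
  have h2 : (μH[2] : Measure (Fin 2 → ℝ)) = volume := by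
    have := hausdorffMeasure_pi_real (ι := Fin 2)
    simpa using this
  calc (μH[2] : Measure E3) (Metric.sphere 0 1) ≤ μH[2] (Φ '' S) := measure_mono hsub
    _ ≤ (K : ENNReal) ^ (2 : ℝ) * μH[2] S := hK.hausdorffMeasure_image_le (by norm_num)
    _ < ⊤ := by
      rw [h2]
      exact ENNReal.mul_lt_top (ENNReal.rpow_lt_top_of_nonneg (by norm_num) ENNReal.coe_ne_top)
        isCompact_Icc.measure_lt_top

instance : IsFiniteMeasure sphMeas :=
  ⟨by simpa [sphMeas] using hausdorff_sphere_lt_top⟩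

lemma ae_sphMeas : ∀ᵐ Ω ∂sphMeas, ‖Ω‖ = 1 := by
  filter_upwards [ae_restrict_mem (μ := (μH[2] : Measure E3))
    (Metric.isClosed_sphere (x := (0 : E3)) (ε := 1)).measurableSet] with Ω h
  simpa using h

lemma measurePreserving_sphMeas (e : E3 ≃ₗᵢ[ℝ] E3) : MeasurePreserving e sphMeas sphMeas := by
  have h := (e.toIsometryEquiv.measurePreserving_hausdorffMeasure 2).restrict_preimage
    (Metric.isClosed_sphere (x := (0 : E3)) (ε := 1)).measurableSet
  have : e.toIsometryEquiv ⁻¹' Metric.sphere (0 : E3) 1 = Metric.sphere 0 1 := by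
    ext x; simp
  rw [this] at h
  exact h

/-- The total cross section `∫ (v·Ω)₊ dΩ`. -/
def crossSec (v : E3) : ENNReal := ∫⁻ Ω, ENNReal.ofReal ⟪v, Ω⟫ ∂sphMeas

/-- The value of `crossSec` on unit vectors. -/
def crossConst : ENNReal := crossSec (EuclideanSpace.single 0 1)

/-- Rotation invariance (through a reflection exchanging two vectors of equal length) and
homogeneity show that the cross section depends on `‖v‖` only, and linearly. -/
lemma crossSec_eq (v : E3) : crossSec v = crossConst * ENNReal.ofReal ‖v‖ := by
  have h1 : crossSec v = crossSec (‖v‖ • EuclideanSpace.single 0 1 : E3) := by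
    set w : E3 := ‖v‖ • EuclideanSpace.single 0 1 with hw
    have hn : ‖v‖ = ‖w‖ := by simp [hw, norm_smul]
    have hr := Submodule.reflection_sub hn
    set e := Submodule.reflection (ℝ ∙ (v - w))ᗮ with he
    unfold crossSec
    symm
    rw [← (measurePreserving_sphMeas e).lintegral_comp (by fun_prop)]
    refine lintegral_congr fun Ω => ?_
    rw [← hr, e.inner_map_map]
  rw [h1, crossConst, crossSec, crossSec, mul_comm, ← lintegral_const_mul _ (by fun_prop)]
  refine lintegral_congr fun Ω => ?_
  rw [inner_smul_left, ← ENNReal.ofReal_mul (norm_nonneg _)]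
  simp

lemma crossConst_ne_top : crossConst ≠ ⊤ := by
  refine ne_of_lt (lt_of_le_of_lt (lintegral_mono_ae (g := fun _ => 1) ?_) ?_)
  · filter_upwards [ae_sphMeas] with Ω hΩ
    rw [← ENNReal.ofReal_one]
    refine ENNReal.ofReal_le_ofReal ((real_inner_le_norm _ _).trans ?_)
    simp [hΩ]
  · simp

/-! ### Collisions -/

/-- Post-collisional velocities `(ξ', ξ'_*)`, as a linear map. -/
def collMap (Ω : E3) : (E3 × E3) →ₗ[ℝ] (E3 × E3) where
  toFun p := (p.1 - ⟪p.1 - p.2, Ω⟫ • Ω, p.2 + ⟪p.1 - p.2, Ω⟫ • Ω)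
  map_add' p q := by
    ext i <;> simp [inner_add_left, inner_sub_left] <;> ring
  map_smul' c p := by
    ext i <;> simp [inner_smul_left, inner_sub_left] <;> ring

lemma collMap_inner {Ω : E3} (h : ‖Ω‖ = 1) (p : E3 × E3) :
    ⟪(collMap Ω p).1 - (collMap Ω p).2, Ω⟫ = -⟪p.1 - p.2, Ω⟫ := by
  simp [collMap, inner_sub_left, inner_add_left, inner_smul_left, h]

lemma collMap_invol {Ω : E3} (h : ‖Ω‖ = 1) (p : E3 × E3) : collMap Ω (collMap Ω p) = p := by
  have := collMap_inner h p
  change ((collMap Ω p).1 - _ • Ω, (collMap Ω p).2 + _ • Ω) = p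
  rw [this]
  ext i <;> simp [collMap]

/-- The collision map is an involution, so its determinant is `±1`. -/
lemma measurePreserving_collMap {Ω : E3} (h : ‖Ω‖ = 1) :
    MeasurePreserving (collMap Ω) (volume : Measure (E3 × E3)) volume := by
  have hc : collMap Ω ∘ₗ collMap Ω = LinearMap.id := LinearMap.ext (collMap_invol h)
  have hd : LinearMap.det (collMap Ω) * LinearMap.det (collMap Ω) = 1 := by
    rw [← LinearMap.det_comp, hc, LinearMap.det_id]
  have h0 : LinearMap.det (collMap Ω) ≠ 0 := by
    intro h0; simp [h0] at hd
  have hab : |LinearMap.det (collMap Ω)| = 1 := by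
    rcases mul_self_eq_one_iff.1 hd with h | h <;> simp [h]
  refine ⟨(LinearMap.continuous_of_finiteDimensional _).measurable, ?_⟩
  have : (volume : Measure (E3 × E3)).IsAddHaarMeasure :=
    inferInstanceAs ((volume : Measure E3).prod (volume : Measure E3)).IsAddHaarMeasure
  rw [Measure.map_linearMap_addHaar_eq_smul_addHaar _ h0, abs_inv, hab]
  simp

/-- Energy conservation about an arbitrary centre. -/
lemma collMap_energy {Ω : E3} (h : ‖Ω‖ = 1) (p : E3 × E3) (u : E3) :
    ‖(collMap Ω p).1 - u‖ ^ 2 + ‖(collMap Ω p).2 - u‖ ^ 2 = ‖p.1 - u‖ ^ 2 + ‖p.2 - u‖ ^ 2 := by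
  obtain ⟨x, y⟩ := p
  have h1 : (collMap Ω (x, y)).1 - u = (x - u) - ⟪x - y, Ω⟫ • Ω := by simp [collMap]; abel
  have h2 : (collMap Ω (x, y)).2 - u = (y - u) + ⟪x - y, Ω⟫ • Ω := by simp [collMap]; abel
  have h3 : x - y = (x - u) - (y - u) := by abel
  rw [h1, h2, h3, norm_sub_sq_real, norm_add_sq_real]
  simp only [inner_smul_right, norm_smul, h, inner_sub_left, Real.norm_eq_abs, mul_one, sq_abs]
  ring

/-! ### Gaussian moments and the collision frequency -/

lemma maxwellian_pos {R ρ θ : ℝ} (hR : 0 < R) (hρ : 0 < ρ) (hθ : 0 < θ) (u ξ : E3) :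
    0 < maxwellian R ρ θ u ξ := by
  unfold maxwellian
  have := Real.pi_pos
  positivity

@[fun_prop]
lemma continuous_maxwellian (R ρ θ : ℝ) (u : E3) : Continuous (maxwellian R ρ θ u) := by
  unfold maxwellian
  fun_prop

lemma integrable_gauss {c : ℝ} (hc : 0 < c) (u : E3) :
    Integrable (fun z : E3 => Real.exp (-c * ‖z - u‖ ^ 2)) := by
  have h := (GaussianFourier.integrable_cexp_neg_mul_sq_norm_add (V := E3) (b := (c : ℂ))
    (by simpa using hc) 0 0).norm
  have h' : Integrable (fun z : E3 => Real.exp (-c * ‖z‖ ^ 2)) := by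
    refine h.congr (Eventually.of_forall fun z => ?_)
    simp only [Complex.norm_exp]
    congr 1
    simp [← Complex.ofReal_pow]
  exact h'.comp_sub_right u

lemma integrable_one_add_norm_mul_maxwellian {R ρ θ : ℝ} (hR : 0 < R) (hρ : 0 < ρ) (hθ : 0 < θ)
    (u : E3) : Integrable (fun z : E3 => (1 + ‖z‖) * maxwellian R ρ θ u z) := by
  set c : ℝ := 1 / (4 * R * θ) with hcdef
  have hc : 0 < c := by positivity
  set a : ℝ := ρ / Real.sqrt ((2 * Real.pi * R * θ) ^ 3) with ha
  have ha0 : 0 ≤ a := by positivity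
  refine ((integrable_gauss hc u).const_mul (a * (2 + ‖u‖ + c⁻¹))).mono'
    (by fun_prop) (Eventually.of_forall fun z => ?_)
  have hm := maxwellian_pos hR hρ hθ u z
  rw [Real.norm_of_nonneg (by positivity)]
  -- half of the Gaussian decay absorbs the linear factor
  have hsplit : maxwellian R ρ θ u z
      = a * (Real.exp (-(c * ‖z - u‖ ^ 2)) * Real.exp (-c * ‖z - u‖ ^ 2)) := by
    rw [← Real.exp_add, maxwellian, ← ha]
    congr 2
    rw [hcdef]; field_simp; ring
  set r := ‖z - u‖ with hr
  have hz : ‖z‖ ≤ r + ‖u‖ := by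
    simpa using norm_add_le (z - u) u
  have hexp : c * r ^ 2 + 1 ≤ Real.exp (c * r ^ 2) := Real.add_one_le_exp _
  have hcr : r ^ 2 = c⁻¹ * (c * r ^ 2) := by field_simp
  have hci : 0 < c⁻¹ := by positivity
  have hx0 : 0 ≤ c * r ^ 2 := by positivity
  have key : (1 + ‖z‖) * Real.exp (-(c * r ^ 2)) ≤ 2 + ‖u‖ + c⁻¹ := by
    rw [Real.exp_neg, ← div_eq_mul_inv, div_le_iff₀ (Real.exp_pos _)]
    have h1 : 1 + ‖z‖ ≤ 2 + ‖u‖ + c⁻¹ * (c * r ^ 2) := by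
      rw [← hcr]; nlinarith [sq_nonneg (r - 1 / 2)]
    have h2 : 2 + ‖u‖ + c⁻¹ * (c * r ^ 2) ≤ (2 + ‖u‖ + c⁻¹) * (c * r ^ 2 + 1) := by
      nlinarith [norm_nonneg u, mul_nonneg (norm_nonneg u) hx0]
    refine h1.trans (h2.trans ?_)
    gcongr
  calc (1 + ‖z‖) * maxwellian R ρ θ u z
      = a * ((1 + ‖z‖) * Real.exp (-(c * r ^ 2))) * Real.exp (-c * r ^ 2) := by rw [hsplit]; ring
    _ ≤ a * (2 + ‖u‖ + c⁻¹) * Real.exp (-c * r ^ 2) := by gcongr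

lemma lintegral_moment_lt_top {R ρ θ : ℝ} (hR : 0 < R) (hρ : 0 < ρ) (hθ : 0 < θ) (u : E3) :
    ∫⁻ z, ENNReal.ofReal (maxwellian R ρ θ u z) < ⊤ ∧
    ∫⁻ z, ENNReal.ofReal (maxwellian R ρ θ u z) * ENNReal.ofReal ‖z‖ < ⊤ := by
  have h := (integrable_one_add_norm_mul_maxwellian hR hρ hθ u).lintegral_lt_top
  constructor <;> refine lt_of_le_of_lt (lintegral_mono fun z => ?_) h
  · have := maxwellian_pos hR hρ hθ u z
    refine ENNReal.ofReal_le_ofReal ?_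
    nlinarith [norm_nonneg z]
  · have := maxwellian_pos hR hρ hθ u z
    dsimp only
    rw [← ENNReal.ofReal_mul this.le]
    refine ENNReal.ofReal_le_ofReal ?_
    nlinarith [norm_nonneg z]

/-- Normalised collision frequency `∫ M(z) ‖ξ - z‖ dz` of a Maxwellian. -/
def freqM (R ρ θ : ℝ) (u ξ : E3) : ENNReal :=
  ∫⁻ z, ENNReal.ofReal (maxwellian R ρ θ u z) * ENNReal.ofReal ‖ξ - z‖

lemma freqM_le {R ρ θ : ℝ} (u ξ : E3) :
    freqM R ρ θ u ξ ≤ (∫⁻ z, ENNReal.ofReal (maxwellian R ρ θ u z)) * ENNReal.ofReal ‖ξ‖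
      + ∫⁻ z, ENNReal.ofReal (maxwellian R ρ θ u z) * ENNReal.ofReal ‖z‖ := by
  rw [← lintegral_mul_const _ (by fun_prop), ← lintegral_add_left (by fun_prop)]
  refine lintegral_mono fun z => ?_
  dsimp only
  rw [← mul_add, ← ENNReal.ofReal_add (norm_nonneg _) (norm_nonneg _)]
  gcongr
  exact norm_sub_le _ _

lemma freqM_lt_top {R ρ θ : ℝ} (hR : 0 < R) (hρ : 0 < ρ) (hθ : 0 < θ) (u ξ : E3) :
    freqM R ρ θ u ξ < ⊤ := by
  obtain ⟨h1, h2⟩ := lintegral_moment_lt_top hR hρ hθ u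
  exact (freqM_le u ξ).trans_lt
    (ENNReal.add_lt_top.2 ⟨ENNReal.mul_lt_top h1 ENNReal.ofReal_lt_top, h2⟩)

/-- Mass of the standard Maxwellian. Its exact value `1` plays no role. -/
def mass : ENNReal := ∫⁻ z, ENNReal.ofReal (maxwellian 1 1 1 0 z)

lemma mass_ne_top : mass ≠ ⊤ :=
  (lintegral_moment_lt_top one_pos one_pos one_pos 0).1.ne

lemma mass_ne_zero : mass ≠ 0 := by
  unfold mass
  rw [← pos_iff_ne_zero, lintegral_pos_iff_support (by fun_prop)]
  have : Function.support (fun z : E3 => ENNReal.ofReal (maxwellian 1 1 1 0 z)) = univ := by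
    ext z; simp [maxwellian_pos one_pos one_pos one_pos 0 z]
  rw [this]
  exact isOpen_univ.measure_pos volume univ_nonempty

lemma freq_zero_ne_zero : freqM 1 1 1 0 0 ≠ 0 := by
  unfold freqM
  rw [← pos_iff_ne_zero, lintegral_pos_iff_support (by fun_prop)]
  have : Function.support (fun z : E3 => ENNReal.ofReal (maxwellian 1 1 1 0 z)
      * ENNReal.ofReal ‖(0 : E3) - z‖) = {0}ᶜ := by
    ext z; simp [maxwellian_pos one_pos one_pos one_pos 0 z]
  rw [this]
  exact isOpen_compl_singleton.measure_pos volume ⟨EuclideanSpace.single 0 1, by simp⟩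

lemma freq_neg (ξ : E3) : freqM 1 1 1 0 (-ξ) = freqM 1 1 1 0 ξ := by
  unfold freqM
  rw [← lintegral_neg_eq_self]
  refine lintegral_congr fun z => ?_
  have : ‖-ξ - -z‖ = ‖ξ - z‖ := by rw [← norm_neg]; congr 1; abel
  rw [this]
  simp [maxwellian]

/-- The triangle inequality averaged against the standard Maxwellian. -/
lemma dist_le_freq (ξ η : E3) :
    mass * ENNReal.ofReal ‖ξ - η‖ ≤ freqM 1 1 1 0 ξ + freqM 1 1 1 0 η := by
  unfold mass freqM
  rw [← lintegral_mul_const _ (by fun_prop), ← lintegral_add_left (by fun_prop)]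
  refine lintegral_mono fun z => ?_
  dsimp only
  rw [← mul_add, ← ENNReal.ofReal_add (norm_nonneg _) (norm_nonneg _)]
  gcongr
  rw [norm_sub_rev η z]
  exact norm_sub_le_norm_sub_add_norm_sub _ _ _

lemma norm_le_freq (ξ : E3) : mass * ENNReal.ofReal ‖ξ‖ ≤ freqM 1 1 1 0 ξ := by
  have h := dist_le_freq ξ (-ξ)
  rw [freq_neg, ← two_mul] at h
  have h2 : ‖ξ - -ξ‖ = 2 * ‖ξ‖ := by
    rw [sub_neg_eq_add, ← two_smul ℝ, norm_smul]; simp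
  rw [h2, ENNReal.ofReal_mul (by norm_num), mul_left_comm,
    ENNReal.ofReal_ofNat] at h
  exact (ENNReal.mul_le_mul_iff_right (by simp) (by simp)).1 h

/-- The average of `‖ξ - z‖` and `‖-ξ - z‖` is at least `‖z‖`. -/
lemma freq_zero_le (ξ : E3) : freqM 1 1 1 0 0 ≤ freqM 1 1 1 0 ξ := by
  have h : 2 * freqM 1 1 1 0 0 ≤ 2 * freqM 1 1 1 0 ξ := by
    conv_rhs => rw [two_mul]
    nth_rewrite 3 [← freq_neg]
    unfold freqM
    rw [← lintegral_const_mul _ (by fun_prop), ← lintegral_add_left (by fun_prop)]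
    refine lintegral_mono fun z => ?_
    dsimp only
    rw [← mul_add, ← ENNReal.ofReal_add (norm_nonneg _) (norm_nonneg _), mul_left_comm]
    gcongr
    have h0 : 2 * ENNReal.ofReal ‖(0 : E3) - z‖ = ENNReal.ofReal (2 * ‖(0 : E3) - z‖) := by
      rw [ENNReal.ofReal_mul (by norm_num), ENNReal.ofReal_ofNat]
    rw [h0]
    refine ENNReal.ofReal_le_ofReal ?_
    have h1 := norm_add_le (ξ - z) (-ξ - z)
    have h2 : (ξ - z) + (-ξ - z) = (2 : ℝ) • ((0 : E3) - z) := by rw [two_smul]; abel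
    rw [h2, norm_smul] at h1
    simpa using h1
  exact (ENNReal.mul_le_mul_iff_right (by simp) (by simp)).1 h

/-- All Maxwellians have comparable collision frequencies. -/
lemma exists_freqM_le {R ρ θ : ℝ} (hR : 0 < R) (hρ : 0 < ρ) (hθ : 0 < θ) (u : E3) :
    ∃ C : ENNReal, C ≠ ⊤ ∧ ∀ ξ, freqM R ρ θ u ξ ≤ C * freqM 1 1 1 0 ξ := by
  obtain ⟨h1, h2⟩ := lintegral_moment_lt_top hR hρ hθ u
  set A := ∫⁻ z, ENNReal.ofReal (maxwellian R ρ θ u z)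
  set B := ∫⁻ z, ENNReal.ofReal (maxwellian R ρ θ u z) * ENNReal.ofReal ‖z‖
  have hn := (freqM_lt_top one_pos one_pos one_pos 0 0).ne
  refine ⟨A * mass⁻¹ + B * (freqM 1 1 1 0 0)⁻¹, ?_, fun ξ => (freqM_le u ξ).trans ?_⟩
  · exact (ENNReal.add_lt_top.2
      ⟨ENNReal.mul_lt_top h1 (ENNReal.inv_lt_top.2 (pos_iff_ne_zero.2 mass_ne_zero)),
        ENNReal.mul_lt_top h2 (ENNReal.inv_lt_top.2 (pos_iff_ne_zero.2 freq_zero_ne_zero))⟩).ne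
  · rw [add_mul, mul_assoc, mul_assoc]
    gcongr
    · rw [mul_comm, ← div_eq_mul_inv, ENNReal.le_div_iff_mul_le (Or.inl mass_ne_zero) (Or.inl mass_ne_top)]
      rw [mul_comm]
      exact norm_le_freq ξ
    · calc B = B * ((freqM 1 1 1 0 0)⁻¹ * freqM 1 1 1 0 0) := by
            rw [ENNReal.inv_mul_cancel freq_zero_ne_zero hn, mul_one]
        _ ≤ _ := by gcongr; exact freq_zero_le ξ

/-- The Bochner-integral collision frequency is the normalised one times the cross section. -/
lemma ofReal_collFreq (ξ : E3) :
    ENNReal.ofReal (collFreq ξ) = crossConst * freqM 1 1 1 0 ξ := by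
  have hin : ∀ ξs : E3, (∫ Ω in Metric.sphere (0 : E3) 1,
      (if 0 ≤ ⟪ξ - ξs, Ω⟫ then maxwellian 1 1 1 0 ξs * |⟪ξ - ξs, Ω⟫| else 0) ∂μH[2])
      = crossConst.toReal * (maxwellian 1 1 1 0 ξs * ‖ξ - ξs‖) := by
    intro ξs
    have hp := maxwellian_pos one_pos one_pos one_pos 0 ξs
    have e1 : ∀ Ω : E3, (if 0 ≤ ⟪ξ - ξs, Ω⟫ then maxwellian 1 1 1 0 ξs * |⟪ξ - ξs, Ω⟫| else 0)
        = maxwellian 1 1 1 0 ξs * max ⟪ξ - ξs, Ω⟫ 0 := by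
      intro Ω
      split_ifs with h
      · rw [abs_of_nonneg h, max_eq_left h]
      · rw [max_eq_right (not_le.1 h).le, mul_zero]
    simp_rw [e1]
    rw [integral_const_mul, integral_eq_lintegral_of_nonneg_ae
      (f := fun Ω => max ⟪ξ - ξs, Ω⟫ 0) (Eventually.of_forall fun Ω => le_max_right _ _)
      (by fun_prop)]
    have e2 : ∫⁻ Ω in Metric.sphere (0 : E3) 1, ENNReal.ofReal (max ⟪ξ - ξs, Ω⟫ 0) ∂μH[2]
        = crossSec (ξ - ξs) := by
      unfold crossSec sphMeas
      refine lintegral_congr fun Ω => ?_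
      simp
    rw [e2, crossSec_eq, ENNReal.toReal_mul, ENNReal.toReal_ofReal (norm_nonneg _)]
    ring
  unfold collFreq
  simp_rw [hin]
  rw [integral_const_mul, ENNReal.ofReal_mul ENNReal.toReal_nonneg,
    ENNReal.ofReal_toReal crossConst_ne_top]
  congr 1
  have hnn : ∀ z : E3, 0 ≤ maxwellian 1 1 1 0 z * ‖ξ - z‖ := fun z =>
    mul_nonneg (maxwellian_pos one_pos one_pos one_pos 0 z).le (norm_nonneg _)
  have hl : ∫⁻ z, ENNReal.ofReal (maxwellian 1 1 1 0 z * ‖ξ - z‖) = freqM 1 1 1 0 ξ :=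
    lintegral_congr fun z =>
      ENNReal.ofReal_mul (maxwellian_pos one_pos one_pos one_pos 0 z).le
  rw [ofReal_integral_eq_lintegral_ofReal _ (Eventually.of_forall hnn), hl]
  refine ⟨by fun_prop, ?_⟩
  rw [hasFiniteIntegral_iff_ofReal (Eventually.of_forall hnn), hl]
  exact freqM_lt_top one_pos one_pos one_pos 0 ξ

lemma collFreq_nonneg (ξ : E3) : 0 ≤ collFreq ξ := by
  refine integral_nonneg fun z => integral_nonneg fun Ω => ?_
  have := maxwellian_pos one_pos one_pos one_pos 0 z
  dsimp only
  split_ifs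
  · exact mul_nonneg this.le (abs_nonneg _)
  · exact le_rfl

/-! ### Measure-theoretic tools -/

/-- Weighted Cauchy–Schwarz inequality. -/
lemma lintegral_cauchy_schwarz {α : Type*} [MeasurableSpace α] (μ : Measure α)
    {f g k : α → ENNReal} (hf : Measurable f) (hg : Measurable g) (hk : Measurable k) :
    (∫⁻ x, f x * g x * k x ∂μ) ^ 2 ≤ (∫⁻ x, f x ^ 2 * k x ∂μ) * ∫⁻ x, g x ^ 2 * k x ∂μ := by
  have hh : (2 : ℝ).HolderConjugate 2 := Real.HolderConjugate.two_two
  have h := ENNReal.lintegral_mul_le_Lp_mul_Lq (μ.withDensity k) hh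
    hf.aemeasurable hg.aemeasurable
  rw [lintegral_withDensity_eq_lintegral_mul _ hk (hf.mul hg),
    lintegral_withDensity_eq_lintegral_mul _ hk (hf.pow_const (2 : ℝ)),
    lintegral_withDensity_eq_lintegral_mul _ hk (hg.pow_const (2 : ℝ))] at h
  simp only [Pi.mul_apply, ENNReal.rpow_ofNat, mul_comm (k _)] at h
  have h2 := pow_le_pow_left₀ (zero_le) h 2
  rw [mul_pow, ← ENNReal.rpow_natCast, ← ENNReal.rpow_natCast, ← ENNReal.rpow_natCast,
    ← ENNReal.rpow_mul, ← ENNReal.rpow_mul] at h2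
  simpa using h2

/-- A measurable majorant that differs from the original function on a null set only. -/
lemma exists_measurable_majorant {α : Type*} [MeasurableSpace α] {μ : Measure α}
    {h : α → ENNReal} (hh : AEMeasurable h μ) :
    ∃ P : α → ENNReal, Measurable P ∧ (∀ x, h x ≤ P x) ∧ P =ᵐ[μ] h := by
  obtain ⟨h0, hm, he⟩ := hh
  set T := toMeasurable μ {x | h x ≠ h0 x} with hT
  have hT0 : μ T = 0 := by rw [hT, measure_toMeasurable]; exact he
  refine ⟨T.piecewise (fun _ => ⊤) h0,
    Measurable.piecewise (measurableSet_toMeasurable _ _) measurable_const hm, fun x => ?_, ?_⟩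
  · by_cases hx : x ∈ T
    · simp [hx]
    · simp only [Set.piecewise, hx, if_false]
      by_contra hne
      exact hx (subset_toMeasurable _ _ (fun h' => hne h'.le))
  · filter_upwards [he, compl_mem_ae_iff.2 hT0] with x hx hxT
    have : x ∉ T := hxT
    simp [this, hx]

/-! ### Changes of variables for the trilinear integrals -/

lemma continuous_collMap : Continuous (fun z : (E3 × E3) × E3 => collMap z.2 z.1) := by
  simp only [collMap, LinearMap.coe_mk, AddHom.coe_mk]
  fun_prop

/-- The symmetric hard-sphere kernel `|(ξ - ξ_*)·Ω|`. -/
def kern (q : E3 × E3) (Ω : E3) : ENNReal := ENNReal.ofReal |⟪q.1 - q.2, Ω⟫|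

lemma measurable_kern : Measurable (fun z : (E3 × E3) × E3 => kern z.1 z.2) := by
  unfold kern
  fun_prop

lemma lintegral_reorder {W : (E3 × E3) × E3 → ENNReal} (hW : Measurable W) :
    ∫⁻ ξ : E3, ∫⁻ p : E3 × E3, W ((ξ, p.1), p.2) ∂((volume : Measure E3).prod sphMeas)
      = ∫⁻ Ω, (∫⁻ q : E3 × E3, W (q, Ω)) ∂sphMeas := by
  have h1 : ∀ ξ : E3, ∫⁻ p : E3 × E3, W ((ξ, p.1), p.2) ∂((volume : Measure E3).prod sphMeas)
      = ∫⁻ ξs : E3, ∫⁻ Ω, W ((ξ, ξs), Ω) ∂sphMeas := fun ξ => by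
    rw [lintegral_prod _ (by fun_prop)]
  simp_rw [h1]
  have h2 : Measurable (fun q : E3 × E3 => ∫⁻ Ω, W (q, Ω) ∂sphMeas) := hW.lintegral_prod_right'
  rw [lintegral_lintegral_swap (f := fun Ω q => W (q, Ω)) (hW.comp measurable_swap).aemeasurable,
    Measure.volume_eq_prod,
    lintegral_prod _ h2.aemeasurable]

lemma lintegral_kern (v : E3 × E3) :
    ∫⁻ Ω, kern v Ω ∂sphMeas = 2 * crossConst * ENNReal.ofReal ‖v.1 - v.2‖ := by
  have h : ∀ Ω, kern v Ω
      = ENNReal.ofReal ⟪v.1 - v.2, Ω⟫ + ENNReal.ofReal ⟪-(v.1 - v.2), Ω⟫ := by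
    intro Ω
    rw [inner_neg_left, kern]
    rcases le_total 0 ⟪v.1 - v.2, Ω⟫ with h | h
    · rw [abs_of_nonneg h, ENNReal.ofReal_of_nonpos (by linarith : -⟪v.1 - v.2, Ω⟫ ≤ 0), add_zero]
    · rw [abs_of_nonpos h, ENNReal.ofReal_of_nonpos h, zero_add]
  simp_rw [h]
  rw [lintegral_add_left (by fun_prop)]
  change crossSec _ + crossSec _ = _
  rw [crossSec_eq, crossSec_eq, norm_neg]
  ring

lemma lintegral_kern_coll {T : E3 × E3 → ENNReal} (hT : Measurable T) :
    ∫⁻ Ω, (∫⁻ q : E3 × E3, T (collMap Ω q) * kern q Ω) ∂sphMeas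
      = ∫⁻ Ω, (∫⁻ q : E3 × E3, T q * kern q Ω) ∂sphMeas := by
  refine lintegral_congr_ae ?_
  filter_upwards [ae_sphMeas] with Ω hΩ
  have hm : Measurable (fun q : E3 × E3 => T q * kern q Ω) := by
    unfold kern; fun_prop
  rw [← (measurePreserving_collMap hΩ).lintegral_comp hm]
  refine lintegral_congr fun q => ?_
  rw [kern, kern, collMap_inner hΩ, abs_neg]

lemma lintegral_kern_swap {T : E3 × E3 → ENNReal} (hT : Measurable T) :
    ∫⁻ Ω, (∫⁻ q : E3 × E3, T q.swap * kern q Ω) ∂sphMeas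
      = ∫⁻ Ω, (∫⁻ q : E3 × E3, T q * kern q Ω) ∂sphMeas := by
  refine lintegral_congr fun Ω => ?_
  have hm : Measurable (fun q : E3 × E3 => T q * kern q Ω) := by
    unfold kern; fun_prop
  have hs : MeasurePreserving (Prod.swap : E3 × E3 → E3 × E3) volume volume :=
    Measure.measurePreserving_swap
  rw [← hs.lintegral_comp hm]
  refine lintegral_congr fun q => ?_
  rw [kern, kern, Prod.fst_swap, Prod.snd_swap, ← neg_sub, inner_neg_left, abs_neg]

lemma measurable_freqM : Measurable (freqM 1 1 1 0) := by
  unfold freqM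
  refine Measurable.lintegral_prod_right' (f := fun p : E3 × E3 =>
    ENNReal.ofReal (maxwellian 1 1 1 0 p.2) * ENNReal.ofReal ‖p.1 - p.2‖) ?_
  fun_prop

/-- The four products of `P` and `P₂` entering the collision integral. -/
def quad (P P₂ : E3 → ENNReal) (z : (E3 × E3) × E3) : ENNReal :=
  (P (collMap z.2 z.1).1 * P₂ (collMap z.2 z.1).2 + P (collMap z.2 z.1).2 * P₂ (collMap z.2 z.1).1)
    + (P z.1.1 * P₂ z.1.2 + P z.1.2 * P₂ z.1.1)

lemma measurable_quad {P P₂ : E3 → ENNReal} (hP : Measurable P) (hP₂ : Measurable P₂) :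
    Measurable (quad P P₂) := by
  unfold quad
  have := continuous_collMap.measurable
  fun_prop

lemma ennreal_add_sq_le (a b : ENNReal) : (a + b) ^ 2 ≤ 4 * (a ^ 2 + b ^ 2) := by
  rcases le_total a b with h | h
  · calc (a + b) ^ 2 ≤ (b + b) ^ 2 := by gcongr
      _ = 4 * b ^ 2 := by ring
      _ ≤ _ := by gcongr; exact le_add_self
  · calc (a + b) ^ 2 ≤ (a + a) ^ 2 := by gcongr
      _ = 4 * a ^ 2 := by ring
      _ ≤ _ := by gcongr; exact le_self_add

lemma lintegral_four {α : Type*} [MeasurableSpace α] {μ : Measure α} {a b c d : α → ENNReal}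
    (ha : Measurable a) (hb : Measurable b) (hc : Measurable c) (hd : Measurable d) :
    ∫⁻ x, 16 * ((a x + b x) + (c x + d x)) ∂μ
      = 16 * (((∫⁻ x, a x ∂μ) + ∫⁻ x, b x ∂μ) + ((∫⁻ x, c x ∂μ) + ∫⁻ x, d x ∂μ)) := by
  rw [lintegral_const_mul _ (by fun_prop), lintegral_add_left (by fun_prop),
    lintegral_add_left ha, lintegral_add_left hc]

/-- After the measure-preserving changes of variables the four terms contribute equally. -/
lemma lintegral_quad_le {P P₂ : E3 → ENNReal} (hP : Measurable P) (hP₂ : Measurable P₂) :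
    ∫⁻ ξ : E3, ∫⁻ p : E3 × E3, quad P P₂ ((ξ, p.1), p.2) ^ 2 * kern (ξ, p.1) p.2
        ∂((volume : Measure E3).prod sphMeas)
      ≤ 128 * mass⁻¹ *
        ((∫⁻ ξ, crossConst * freqM 1 1 1 0 ξ * P ξ ^ 2) * (∫⁻ ξ, P₂ ξ ^ 2)
          + (∫⁻ ξ, P ξ ^ 2) * (∫⁻ ξ, crossConst * freqM 1 1 1 0 ξ * P₂ ξ ^ 2)) := by
  set T : E3 × E3 → ENNReal := fun q => (P q.1 * P₂ q.2) ^ 2 with hT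
  have hTm : Measurable T := by fun_prop
  have hcm := continuous_collMap.measurable
  have hk := measurable_kern
  have hkΩ : ∀ Ω, Measurable (fun q => kern q Ω) := fun Ω => by unfold kern; fun_prop
  have hcΩ : ∀ Ω, Measurable (fun q => collMap Ω q) := fun Ω =>
    (LinearMap.continuous_of_finiteDimensional _).measurable
  set D := ∫⁻ Ω, (∫⁻ q : E3 × E3, T q * kern q Ω) ∂sphMeas with hD
  have hTs : Measurable (fun q : E3 × E3 => T q.swap) := hTm.comp measurable_swap
  have m1 : Measurable (fun z : (E3 × E3) × E3 => T (collMap z.2 z.1) * kern z.1 z.2) :=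
    (hTm.comp hcm).mul hk
  have m2 : Measurable (fun z : (E3 × E3) × E3 => T (collMap z.2 z.1).swap * kern z.1 z.2) :=
    (hTs.comp hcm).mul hk
  have m3 : Measurable (fun z : (E3 × E3) × E3 => T z.1 * kern z.1 z.2) :=
    (hTm.comp measurable_fst).mul hk
  have m4 : Measurable (fun z : (E3 × E3) × E3 => T z.1.swap * kern z.1 z.2) :=
    (hTs.comp measurable_fst).mul hk
  have step1 : ∫⁻ ξ : E3, ∫⁻ p : E3 × E3, quad P P₂ ((ξ, p.1), p.2) ^ 2 * kern (ξ, p.1) p.2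
        ∂((volume : Measure E3).prod sphMeas) ≤ 64 * D := by
    rw [lintegral_reorder (W := fun z => quad P P₂ z ^ 2 * kern z.1 z.2)
      (((measurable_quad hP hP₂).pow_const 2).mul hk)]
    have hle : ∀ (Ω : E3) (q : E3 × E3), quad P P₂ (q, Ω) ^ 2 * kern q Ω
        ≤ 16 * ((T (collMap Ω q) * kern q Ω + T (collMap Ω q).swap * kern q Ω)
          + (T q * kern q Ω + T q.swap * kern q Ω)) := by
      intro Ω q
      calc quad P P₂ (q, Ω) ^ 2 * kern q Ω
          ≤ (4 * (4 * (T (collMap Ω q) + T (collMap Ω q).swap) + 4 * (T q + T q.swap)))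
            * kern q Ω := by
            gcongr
            refine (ennreal_add_sq_le _ _).trans ?_
            gcongr
            · exact ennreal_add_sq_le _ _
            · exact ennreal_add_sq_le _ _
        _ = _ := by ring
    refine (lintegral_mono fun Ω => lintegral_mono fun q => hle Ω q).trans ?_
    have e : ∀ Ω, ∫⁻ q : E3 × E3, 16 * ((T (collMap Ω q) * kern q Ω
          + T (collMap Ω q).swap * kern q Ω) + (T q * kern q Ω + T q.swap * kern q Ω))
        = 16 * (((∫⁻ q : E3 × E3, T (collMap Ω q) * kern q Ω)
          + ∫⁻ q : E3 × E3, T (collMap Ω q).swap * kern q Ω)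
          + ((∫⁻ q : E3 × E3, T q * kern q Ω) + ∫⁻ q : E3 × E3, T q.swap * kern q Ω)) := by
      intro Ω
      have hkΩ' := hkΩ Ω
      have hcΩ' := hcΩ Ω
      have n1 : Measurable (fun q => T (collMap Ω q) * kern q Ω) := (hTm.comp hcΩ').mul hkΩ'
      have n2 : Measurable (fun q => T (collMap Ω q).swap * kern q Ω) := (hTs.comp hcΩ').mul hkΩ'
      have n3 : Measurable (fun q => T q * kern q Ω) := hTm.mul hkΩ'
      have n4 : Measurable (fun q : E3 × E3 => T q.swap * kern q Ω) := hTs.mul hkΩ'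
      exact lintegral_four n1 n2 n3 n4
    simp_rw [e]
    have i1 := m1.lintegral_prod_left' (μ := (volume : Measure (E3 × E3)))
    have i2 := m2.lintegral_prod_left' (μ := (volume : Measure (E3 × E3)))
    have i3 := m3.lintegral_prod_left' (μ := (volume : Measure (E3 × E3)))
    have i4 := m4.lintegral_prod_left' (μ := (volume : Measure (E3 × E3)))
    rw [lintegral_four i1 i2 i3 i4, lintegral_kern_coll hTm,
      lintegral_kern_coll hTs, lintegral_kern_swap hTm, ← hD]
    apply le_of_eq
    ring
  have step2 : D = ∫⁻ q : E3 × E3, T q * (2 * crossConst * ENNReal.ofReal ‖q.1 - q.2‖) := by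
    rw [hD, lintegral_lintegral_swap (f := fun Ω q => T q * kern q Ω)
      (m3.comp measurable_swap).aemeasurable]
    refine lintegral_congr fun q => ?_
    rw [lintegral_const_mul _ (by unfold kern; fun_prop), lintegral_kern]
  have hN := measurable_freqM
  have step3 : D ≤ 2 * mass⁻¹ *
        ((∫⁻ ξ, crossConst * freqM 1 1 1 0 ξ * P ξ ^ 2) * (∫⁻ ξ, P₂ ξ ^ 2)
          + (∫⁻ ξ, P ξ ^ 2) * (∫⁻ ξ, crossConst * freqM 1 1 1 0 ξ * P₂ ξ ^ 2)) := by
    rw [step2, Measure.volume_eq_prod,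
      ← lintegral_prod_mul (by fun_prop) (by fun_prop),
      ← lintegral_prod_mul (by fun_prop) (by fun_prop),
      ← lintegral_add_left (by fun_prop), ← lintegral_const_mul _ (by fun_prop)]
    refine lintegral_mono fun q => ?_
    have hd : ENNReal.ofReal ‖q.1 - q.2‖
        ≤ mass⁻¹ * (freqM 1 1 1 0 q.1 + freqM 1 1 1 0 q.2) := by
      rw [mul_comm, ← div_eq_mul_inv,
        ENNReal.le_div_iff_mul_le (Or.inl mass_ne_zero) (Or.inl mass_ne_top), mul_comm]
      exact dist_le_freq _ _
    calc T q * (2 * crossConst * ENNReal.ofReal ‖q.1 - q.2‖)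
        ≤ T q * (2 * crossConst * (mass⁻¹ * (freqM 1 1 1 0 q.1 + freqM 1 1 1 0 q.2))) := by gcongr
      _ = _ := by simp only [hT]; ring
  refine step1.trans ((mul_le_mul_right step3 64).trans (le_of_eq ?_))
  ring

/-! ### Pointwise estimate of the collision operator -/

/-- `√M` as an extended nonnegative real. -/
def sqM (R ρ θ : ℝ) (u ξ : E3) : ENNReal := ENNReal.ofReal (√(maxwellian R ρ θ u ξ))

lemma sqM_sq {R ρ θ : ℝ} (hR : 0 < R) (hρ : 0 < ρ) (hθ : 0 < θ) (u ξ : E3) :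
    sqM R ρ θ u ξ ^ 2 = ENNReal.ofReal (maxwellian R ρ θ u ξ) := by
  rw [sqM, ← ENNReal.ofReal_pow (Real.sqrt_nonneg _),
    Real.sq_sqrt (maxwellian_pos hR hρ hθ u ξ).le]

/-- Energy conservation makes `M(ξ') M(ξ'_*) = M(ξ) M(ξ_*)`. -/
lemma sqM_coll {R ρ θ : ℝ} (hR : 0 < R) (hρ : 0 < ρ) (hθ : 0 < θ) (u : E3) {Ω : E3}
    (h : ‖Ω‖ = 1) (p : E3 × E3) :
    sqM R ρ θ u (collMap Ω p).1 * sqM R ρ θ u (collMap Ω p).2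
      = sqM R ρ θ u p.1 * sqM R ρ θ u p.2 := by
  have hpos := maxwellian_pos hR hρ hθ u
  simp only [sqM]
  rw [← ENNReal.ofReal_mul (Real.sqrt_nonneg _), ← ENNReal.ofReal_mul (Real.sqrt_nonneg _),
    ← Real.sqrt_mul (hpos _).le, ← Real.sqrt_mul (hpos _).le]
  congr 2
  have key : ∀ x y : E3, maxwellian R ρ θ u x * maxwellian R ρ θ u y
      = (ρ / Real.sqrt ((2 * Real.pi * R * θ) ^ 3)) ^ 2
        * Real.exp (-(‖x - u‖ ^ 2 + ‖y - u‖ ^ 2) / (2 * R * θ)) := by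
    intro x y
    simp only [maxwellian]
    rw [show -(‖x - u‖ ^ 2 + ‖y - u‖ ^ 2) / (2 * R * θ)
      = -‖x - u‖ ^ 2 / (2 * R * θ) + -‖y - u‖ ^ 2 / (2 * R * θ) by ring, Real.exp_add]
    ring
  rw [key, key, collMap_energy h]

lemma enorm_Qop_le {R ρ θ : ℝ} (hR : 0 < R) (hρ : 0 < ρ) (hθ : 0 < θ) (u : E3)
    {f g : E3 → ℝ} {P P₂ : E3 → ENNReal} (hP : Measurable P) (hP₂ : Measurable P₂)
    (hf : ∀ x, ‖f x‖ₑ ≤ P x * sqM R ρ θ u x) (hg : ∀ x, ‖g x‖ₑ ≤ P₂ x * sqM R ρ θ u x)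
    (ξ : E3) :
    ‖Qop f g ξ‖ₑ ≤ sqM R ρ θ u ξ * ∫⁻ p : E3 × E3, quad P P₂ ((ξ, p.1), p.2) * sqM R ρ θ u p.1
      * ENNReal.ofReal ⟪ξ - p.1, p.2⟫ ∂((volume : Measure E3).prod sphMeas) := by
  have hq := measurable_quad hP hP₂
  have hs : Measurable (sqM R ρ θ u) := by unfold sqM; fun_prop
  rw [Qop, enorm_mul]
  have h12 : ‖(1 / 2 : ℝ)‖ₑ ≤ 1 := by
    rw [← ofReal_norm, ← ENNReal.ofReal_one]
    exact ENNReal.ofReal_le_ofReal (by norm_num)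
  refine (mul_le_of_le_one_left' h12).trans ?_
  rw [← lintegral_const_mul _ (by fun_prop), lintegral_prod _ (by fun_prop)]
  refine (enorm_integral_le_lintegral_enorm _).trans (lintegral_mono fun ξs => ?_)
  refine (enorm_integral_le_lintegral_enorm _).trans (lintegral_mono_ae ?_)
  filter_upwards [ae_sphMeas] with Ω hΩ
  split_ifs with hpos
  swap
  · simp
  rw [enorm_mul]
  have hv : ‖|⟪ξ - ξs, Ω⟫|‖ₑ = ENNReal.ofReal ⟪ξ - ξs, Ω⟫ := by
    rw [abs_of_nonneg hpos, Real.enorm_of_nonneg hpos]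
  rw [hv]
  set s := sqM R ρ θ u with hsdef
  set x' := ξ - ⟪ξ - ξs, Ω⟫ • Ω with hx'
  set y' := ξs + ⟪ξ - ξs, Ω⟫ • Ω with hy'
  have hc : s x' * s y' = s ξ * s ξs := sqM_coll hR hρ hθ u hΩ (ξ, ξs)
  have hc' : s y' * s x' = s ξ * s ξs := by rw [mul_comm, hc]
  have hfg : ∀ x y : E3, ‖f x * g y‖ₑ ≤ P x * P₂ y * (s x * s y) := by
    intro x y
    rw [enorm_mul]
    refine (mul_le_mul' (hf x) (hg y)).trans (le_of_eq ?_)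
    ring
  have htri : ‖f x' * g y' + f y' * g x' - f ξ * g ξs - f ξs * g ξ‖ₑ
      ≤ quad P P₂ ((ξ, ξs), Ω) * (s ξ * s ξs) := by
    calc ‖f x' * g y' + f y' * g x' - f ξ * g ξs - f ξs * g ξ‖ₑ
        ≤ ‖f x' * g y'‖ₑ + ‖f y' * g x'‖ₑ + ‖f ξ * g ξs‖ₑ + ‖f ξs * g ξ‖ₑ :=
          enorm_sub_le.trans (by gcongr; exact enorm_sub_le.trans (by gcongr; exact enorm_add_le _ _))
      _ ≤ P x' * P₂ y' * (s ξ * s ξs) + P y' * P₂ x' * (s ξ * s ξs)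
          + P ξ * P₂ ξs * (s ξ * s ξs) + P ξs * P₂ ξ * (s ξ * s ξs) := by
          refine add_le_add (add_le_add (add_le_add ?_ ?_) (hfg _ _)) ?_
          · rw [← hc]; exact hfg _ _
          · rw [← hc']; exact hfg _ _
          · rw [mul_comm (s ξ)]; exact hfg _ _
      _ = quad P P₂ ((ξ, ξs), Ω) * (s ξ * s ξs) := by
          change _ = ((P x' * P₂ y' + P y' * P₂ x') + (P ξ * P₂ ξs + P ξs * P₂ ξ)) * (s ξ * s ξs)
          ring
  refine (mul_le_mul_left htri _).trans (le_of_eq ?_)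
  ring

/-- Cauchy–Schwarz in `(ξ_*, Ω)`: the second factor is the collision frequency of `M`, which is
absorbed by `ν⁻¹`. Where `ν = 0`, the left side vanishes by the convention `0⁻¹ = 0`. -/
lemma pointwise_bound {R ρ θ : ℝ} (hR : 0 < R) (hρ : 0 < ρ) (hθ : 0 < θ) (u : E3)
    {C : ENNReal} (hC : ∀ ξ, freqM R ρ θ u ξ ≤ C * freqM 1 1 1 0 ξ)
    {f g : E3 → ℝ} {P P₂ : E3 → ENNReal} (hP : Measurable P) (hP₂ : Measurable P₂)
    (hf : ∀ x, ‖f x‖ₑ ≤ P x * sqM R ρ θ u x) (hg : ∀ x, ‖g x‖ₑ ≤ P₂ x * sqM R ρ θ u x)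
    (ξ : E3) :
    ENNReal.ofReal ((collFreq ξ)⁻¹ * (Qop f g ξ) ^ 2 / maxwellian R ρ θ u ξ)
      ≤ C * ∫⁻ p : E3 × E3, quad P P₂ ((ξ, p.1), p.2) ^ 2 * kern (ξ, p.1) p.2
        ∂((volume : Measure E3).prod sphMeas) := by
  have hq := measurable_quad hP hP₂
  have hs : Measurable (sqM R ρ θ u) := by unfold sqM; fun_prop
  have hM := maxwellian_pos hR hρ hθ u ξ
  rcases (collFreq_nonneg ξ).eq_or_lt with h0 | h0
  · simp [← h0]
  set X := ∫⁻ p : E3 × E3, quad P P₂ ((ξ, p.1), p.2) ^ 2 * kern (ξ, p.1) p.2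
        ∂((volume : Measure E3).prod sphMeas) with hX
  have hQ := enorm_Qop_le hR hρ hθ u hP hP₂ hf hg ξ
  have hCS := lintegral_cauchy_schwarz ((volume : Measure E3).prod sphMeas)
    (f := fun p => quad P P₂ ((ξ, p.1), p.2)) (g := fun p => sqM R ρ θ u p.1)
    (k := fun p => ENNReal.ofReal ⟪ξ - p.1, p.2⟫) (by fun_prop) (by fun_prop) (by fun_prop)
  have hA : ∫⁻ p : E3 × E3, quad P P₂ ((ξ, p.1), p.2) ^ 2 * ENNReal.ofReal ⟪ξ - p.1, p.2⟫
      ∂((volume : Measure E3).prod sphMeas) ≤ X := by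
    refine lintegral_mono fun p => ?_
    dsimp only [kern]
    gcongr
    exact le_abs_self _
  have hB : ∫⁻ p : E3 × E3, sqM R ρ θ u p.1 ^ 2 * ENNReal.ofReal ⟪ξ - p.1, p.2⟫
      ∂((volume : Measure E3).prod sphMeas) ≤ C * ENNReal.ofReal (collFreq ξ) := by
    rw [lintegral_prod _ (by fun_prop)]
    have : ∀ z : E3, ∫⁻ Ω, sqM R ρ θ u z ^ 2 * ENNReal.ofReal ⟪ξ - z, Ω⟫ ∂sphMeas
        = crossConst * (ENNReal.ofReal (maxwellian R ρ θ u z) * ENNReal.ofReal ‖ξ - z‖) := by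
      intro z
      rw [lintegral_const_mul _ (by fun_prop), sqM_sq hR hρ hθ]
      change _ * crossSec _ = _
      rw [crossSec_eq]; ring
    simp_rw [this]
    rw [lintegral_const_mul _ (by fun_prop), ofReal_collFreq, mul_left_comm]
    gcongr
    exact hC ξ
  have hQ2 : ‖Qop f g ξ‖ₑ ^ 2
      ≤ ENNReal.ofReal (maxwellian R ρ θ u ξ) * (X * (C * ENNReal.ofReal (collFreq ξ))) := by
    refine (pow_le_pow_left₀ zero_le hQ 2).trans ?_
    rw [mul_pow, sqM_sq hR hρ hθ]
    gcongr
    exact hCS.trans (mul_le_mul' hA hB)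
  have e : ENNReal.ofReal ((collFreq ξ)⁻¹ * (Qop f g ξ) ^ 2 / maxwellian R ρ θ u ξ)
      = (ENNReal.ofReal (collFreq ξ))⁻¹ * (ENNReal.ofReal (maxwellian R ρ θ u ξ))⁻¹
        * ‖Qop f g ξ‖ₑ ^ 2 := by
    rw [← ENNReal.ofReal_inv_of_pos h0, ← ENNReal.ofReal_inv_of_pos hM,
      ← ofReal_norm, ← ENNReal.ofReal_pow (norm_nonneg _), Real.norm_eq_abs, sq_abs,
      ← ENNReal.ofReal_mul (by positivity), ← ENNReal.ofReal_mul (by positivity)]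
    congr 1
    ring
  rw [e]
  set n := ENNReal.ofReal (collFreq ξ)
  set m := ENNReal.ofReal (maxwellian R ρ θ u ξ)
  have hn : n⁻¹ * n = 1 := ENNReal.inv_mul_cancel (by simpa [n] using h0) ENNReal.ofReal_ne_top
  have hm : m⁻¹ * m = 1 := ENNReal.inv_mul_cancel (by simpa [m] using hM) ENNReal.ofReal_ne_top
  calc n⁻¹ * m⁻¹ * ‖Qop f g ξ‖ₑ ^ 2 ≤ n⁻¹ * m⁻¹ * (m * (X * (C * n))) := by gcongr
    _ = (n⁻¹ * n) * (m⁻¹ * m) * (C * X) := by ring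
    _ = C * X := by rw [hn, hm]; simp

/-- Measurable majorant of `|f|/√M`. The function `f` itself need not be measurable: integrability
of `f²/M` determines `|f|` only. -/
lemma exists_majorant {R ρ θ : ℝ} (hR : 0 < R) (hρ : 0 < ρ) (hθ : 0 < θ) (u : E3) {f : E3 → ℝ}
    (h1 : Integrable (fun ξ : E3 => collFreq ξ * (f ξ) ^ 2 / maxwellian R ρ θ u ξ))
    (h2 : Integrable (fun ξ : E3 => (f ξ) ^ 2 / maxwellian R ρ θ u ξ)) :
    ∃ P : E3 → ENNReal, Measurable P ∧ (∀ x, ‖f x‖ₑ ≤ P x * sqM R ρ θ u x) ∧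
      ∫⁻ ξ, P ξ ^ 2 = ENNReal.ofReal (∫ ξ, (f ξ) ^ 2 / maxwellian R ρ θ u ξ) ∧
      ∫⁻ ξ, crossConst * freqM 1 1 1 0 ξ * P ξ ^ 2
        = ENNReal.ofReal (∫ ξ, collFreq ξ * (f ξ) ^ 2 / maxwellian R ρ θ u ξ) := by
  have hpos := maxwellian_pos hR hρ hθ u
  obtain ⟨P, hPm, hPle, hPae⟩ := exists_measurable_majorant (μ := (volume : Measure E3))
    (h := fun ξ => ENNReal.ofReal (√((f ξ) ^ 2 / maxwellian R ρ θ u ξ)))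
    (h2.aestronglyMeasurable.aemeasurable.sqrt.ennreal_ofReal)
  have hnn : ∀ ξ, 0 ≤ (f ξ) ^ 2 / maxwellian R ρ θ u ξ := fun ξ =>
    div_nonneg (sq_nonneg _) (hpos ξ).le
  have hP2 : ∀ᵐ ξ, P ξ ^ 2 = ENNReal.ofReal ((f ξ) ^ 2 / maxwellian R ρ θ u ξ) := by
    filter_upwards [hPae] with ξ h
    rw [h, ← ENNReal.ofReal_pow (Real.sqrt_nonneg _), Real.sq_sqrt (hnn ξ)]
  refine ⟨P, hPm, fun x => ?_, ?_, ?_⟩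
  · refine le_trans (le_of_eq ?_) (mul_le_mul_left (hPle x) _)
    rw [sqM, ← ENNReal.ofReal_mul (Real.sqrt_nonneg _), ← Real.sqrt_mul (hnn x),
      div_mul_cancel₀ _ (hpos x).ne', Real.sqrt_sq_eq_abs, ← ofReal_norm,
      Real.norm_eq_abs]
  · rw [ofReal_integral_eq_lintegral_ofReal h2 (Eventually.of_forall hnn)]
    exact lintegral_congr_ae hP2
  · rw [ofReal_integral_eq_lintegral_ofReal h1 (Eventually.of_forall fun ξ =>
      div_nonneg (mul_nonneg (collFreq_nonneg ξ) (sq_nonneg _)) (hpos ξ).le)]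
    refine lintegral_congr_ae ?_
    filter_upwards [hP2] with ξ h
    rw [h, ← ofReal_collFreq, ← ENNReal.ofReal_mul (collFreq_nonneg ξ), mul_div_assoc]

/-- **Lemma 3.2** (bilinear collision estimate): for each Maxwellian `M = M_{[ρ,u,θ]}`
there is a constant `C > 0` such that
`∫ ν⁻¹ Q(f,g)²/M ≤ C (∫ ν f²/M · ∫ g²/M + ∫ f²/M · ∫ ν g²/M)`
for all `f, g` for which the integrals are finite. -/
theorem bilinear_collision_estimate (R ρ θ : ℝ) (u : E3)
    (hR : 0 < R) (hρ : 0 < ρ) (hθ : 0 < θ) :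
    ∃ C : ℝ, 0 < C ∧ ∀ f g : E3 → ℝ,
      Integrable (fun ξ : E3 => (collFreq ξ)⁻¹ * (Qop f g ξ) ^ 2 / maxwellian R ρ θ u ξ) →
      Integrable (fun ξ : E3 => collFreq ξ * (f ξ) ^ 2 / maxwellian R ρ θ u ξ) →
      Integrable (fun ξ : E3 => (f ξ) ^ 2 / maxwellian R ρ θ u ξ) →
      Integrable (fun ξ : E3 => collFreq ξ * (g ξ) ^ 2 / maxwellian R ρ θ u ξ) →
      Integrable (fun ξ : E3 => (g ξ) ^ 2 / maxwellian R ρ θ u ξ) →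
      (∫ ξ : E3, (collFreq ξ)⁻¹ * (Qop f g ξ) ^ 2 / maxwellian R ρ θ u ξ)
        ≤ C * ((∫ ξ : E3, collFreq ξ * (f ξ) ^ 2 / maxwellian R ρ θ u ξ)
                  * (∫ ξ : E3, (g ξ) ^ 2 / maxwellian R ρ θ u ξ)
              + (∫ ξ : E3, (f ξ) ^ 2 / maxwellian R ρ θ u ξ)
                  * (∫ ξ : E3, collFreq ξ * (g ξ) ^ 2 / maxwellian R ρ θ u ξ)) := by
  obtain ⟨C, hCtop, hC⟩ := exists_freqM_le hR hρ hθ u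
  have hKtop : C * (128 * mass⁻¹) ≠ ⊤ :=
    ENNReal.mul_ne_top hCtop (ENNReal.mul_ne_top (by simp) (ENNReal.inv_ne_top.2 mass_ne_zero))
  set K := C * (128 * mass⁻¹) with hK
  refine ⟨K.toReal + 1, by positivity, fun f g hQi hf1 hf2 hg1 hg2 => ?_⟩
  obtain ⟨P, hPm, hPle, hP1, hP2⟩ := exists_majorant hR hρ hθ u hf1 hf2
  obtain ⟨P₂, hP₂m, hP₂le, hP₂1, hP₂2⟩ := exists_majorant hR hρ hθ u hg1 hg2
  have hpos := maxwellian_pos hR hρ hθ u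
  have hν := collFreq_nonneg
  have nn1 : ∀ h : E3 → ℝ, 0 ≤ ∫ ξ, (h ξ) ^ 2 / maxwellian R ρ θ u ξ := fun h =>
    integral_nonneg fun ξ => div_nonneg (sq_nonneg _) (hpos ξ).le
  have nn2 : ∀ h : E3 → ℝ, 0 ≤ ∫ ξ, collFreq ξ * (h ξ) ^ 2 / maxwellian R ρ θ u ξ := fun h =>
    integral_nonneg fun ξ => div_nonneg (mul_nonneg (hν ξ) (sq_nonneg _)) (hpos ξ).le
  have hfin := lintegral_quad_le hPm hP₂m
  rw [hP1, hP2, hP₂1, hP₂2, ← ENNReal.ofReal_mul (nn2 f), ← ENNReal.ofReal_mul (nn1 f),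
    ← ENNReal.ofReal_add (mul_nonneg (nn2 f) (nn1 g)) (mul_nonneg (nn1 f) (nn2 g))] at hfin
  have hS := add_nonneg (mul_nonneg (nn2 f) (nn1 g)) (mul_nonneg (nn1 f) (nn2 g))
  set S := (∫ ξ, collFreq ξ * (f ξ) ^ 2 / maxwellian R ρ θ u ξ)
      * (∫ ξ, (g ξ) ^ 2 / maxwellian R ρ θ u ξ) + (∫ ξ, (f ξ) ^ 2 / maxwellian R ρ θ u ξ)
      * (∫ ξ, collFreq ξ * (g ξ) ^ 2 / maxwellian R ρ θ u ξ) with hSdef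
  have hmain : ENNReal.ofReal (∫ ξ, (collFreq ξ)⁻¹ * (Qop f g ξ) ^ 2 / maxwellian R ρ θ u ξ)
      ≤ ENNReal.ofReal (K.toReal * S) := by
    rw [ofReal_integral_eq_lintegral_ofReal hQi (Eventually.of_forall fun ξ =>
      div_nonneg (mul_nonneg (inv_nonneg.2 (hν ξ)) (sq_nonneg _)) (hpos ξ).le),
      ENNReal.ofReal_mul ENNReal.toReal_nonneg, ENNReal.ofReal_toReal hKtop, hK, mul_assoc]
    refine (lintegral_mono fun ξ =>
      pointwise_bound hR hρ hθ u hC hPm hP₂m hPle hP₂le ξ).trans ?_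
    rw [lintegral_const_mul' _ _ hCtop]
    gcongr
  have := (ENNReal.ofReal_le_ofReal_iff (mul_nonneg ENNReal.toReal_nonneg hS)).1 hmain
  linarith

end
end

section
/- Uniform lower bound for the derivative of the diffusion wave on parabolic regions (estimate (2.47)). Let a : (0,∞) → (0,∞) be smooth, θ₋ < θ₊, δ = θ₊ − θ₋ sufficiently small, and let θ̂ be the monotonically increasing self-similar solution of (a(θ̂)θ̂')' + (η/2)θ̂' = 0 with θ̂(∓∞) = θ∓. Then for every η₀ > 0 there exists a positive constant c_{η₀} > 0, independent of δ, such that θ̂'(η) > c_{η₀} δ for all |η| ≤ η₀; moreover c_{η₀} → 0 as η₀ → +∞. -/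
open Filter Topology Set

/-!
Take `δ₀ = 1` and let `0 < m ≤ a ≤ M` on the compact interval `[θm, θm + 1]`, which contains the
range of every wave considered. The flux `u = a(θ̂) θ̂'` is nonnegative and satisfies
`u' = -(η/2) θ̂'`, so that
`(u exp(K η²))' = η · θ̂' (2 K a(θ̂) - 1/2) exp(K η²)`.
With `K = 1/(4M)` the last factor is nonpositive and with `K = 1/(4m)` it is nonnegative; hence
`u(0) exp(-η²/(4m)) ≤ u(η) ≤ u(0) exp(-η²/(4M))` (`DiffusionWave.flux_le`,
`DiffusionWave.le_flux`).

The upper bound limits the total increase of `θ̂`: since `exp(-η²/(4M)) ≤ 1/(1 + η²/(4M))`,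
comparison with an arctangent gives `δ ≤ C u(0)` with `C` depending only on `m` and `M`
(`DiffusionWave.increment_le`). Inserting this lower bound for `u(0)` into the lower bound for
`u(η) ≤ M θ̂'(η)` gives the claim with `c` a multiple of `exp(-η₀²/(4m))`.
-/

namespace DiffusionWave

/-- A function whose derivative has the sign of its argument is minimal at the origin. -/
lemma apply_zero_le {f g : ℝ → ℝ} (hf : ∀ x, HasDerivAt f (x * g x) x) (hg : ∀ x, 0 ≤ g x)
    (x : ℝ) : f 0 ≤ f x := by
  have hd : Differentiable ℝ f := fun y => (hf y).differentiableAt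
  rcases le_total 0 x with hx | hx
  · refine monotoneOn_of_deriv_nonneg (convex_Ici 0) hd.continuous.continuousOn
      hd.differentiableOn (fun y hy => ?_) self_mem_Ici hx hx
    rw [interior_Ici] at hy
    rw [(hf y).deriv]
    exact mul_nonneg (le_of_lt hy) (hg y)
  · refine antitoneOn_of_deriv_nonpos (convex_Iic 0) hd.continuous.continuousOn
      hd.differentiableOn (fun y hy => ?_) hx self_mem_Iic hx
    rw [interior_Iic] at hy
    rw [(hf y).deriv]
    exact mul_nonpos_of_nonpos_of_nonneg (le_of_lt hy) (hg y)

/-- The derivative of the weighted flux `u exp(K η²)`, where `u = A v` and `u' = -(η/2) v`. In the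
application `A = a ∘ θ̂` and `v = θ̂'`. -/
lemma hasDerivAt_weighted {A v : ℝ → ℝ}
    (hu : ∀ x, HasDerivAt (fun s => A s * v s) (-(x / 2) * v x) x) (K x : ℝ) :
    HasDerivAt (fun s => A s * v s * Real.exp (K * s ^ 2))
      (x * (v x * (2 * K * A x - 1 / 2) * Real.exp (K * x ^ 2))) x := by
  have h1 : HasDerivAt (fun s : ℝ => K * s ^ 2) (K * (2 * x)) x := by
    simpa using (hasDerivAt_pow 2 x).const_mul K
  refine ((hu x).mul h1.exp).congr_deriv ?_
  ring

lemma flux_le {A v : ℝ → ℝ} (hu : ∀ x, HasDerivAt (fun s => A s * v s) (-(x / 2) * v x) x)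
    (hv : ∀ x, 0 ≤ v x) {K : ℝ} (hK : ∀ x, 2 * K * A x ≤ 1 / 2) (x : ℝ) :
    A x * v x * Real.exp (K * x ^ 2) ≤ A 0 * v 0 := by
  have h := apply_zero_le (f := fun s => -(A s * v s * Real.exp (K * s ^ 2)))
    (g := fun x => v x * (1 / 2 - 2 * K * A x) * Real.exp (K * x ^ 2))
    (fun y => (hasDerivAt_weighted hu K y).neg.congr_deriv (by ring))
    (fun y => mul_nonneg (mul_nonneg (hv y) (by linarith [hK y])) (Real.exp_pos _).le) x
  simpa using h

lemma le_flux {A v : ℝ → ℝ} (hu : ∀ x, HasDerivAt (fun s => A s * v s) (-(x / 2) * v x) x)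
    (hv : ∀ x, 0 ≤ v x) {K : ℝ} (hK : ∀ x, 1 / 2 ≤ 2 * K * A x) (x : ℝ) :
    A 0 * v 0 ≤ A x * v x * Real.exp (K * x ^ 2) := by
  have h := apply_zero_le (f := fun s => A s * v s * Real.exp (K * s ^ 2))
    (g := fun x => v x * (2 * K * A x - 1 / 2) * Real.exp (K * x ^ 2))
    (fun y => hasDerivAt_weighted hu K y)
    (fun y => mul_nonneg (mul_nonneg (hv y) (by linarith [hK y])) (Real.exp_pos _).le) x
  simpa using h

/-- The function `B / r * arctan (r x)` has derivative `B / (1 + r² x²)` and total increase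
`B π / r`. -/
lemma increment_le {θ v : ℝ → ℝ} {B r l l' : ℝ} (hr : 0 < r)
    (hθ : ∀ x, HasDerivAt θ (v x) x) (hv : ∀ x, v x ≤ B / (1 + (r * x) ^ 2))
    (hbot : Tendsto θ atBot (𝓝 l)) (htop : Tendsto θ atTop (𝓝 l')) :
    l' - l ≤ B / r * Real.pi := by
  set F : ℝ → ℝ := fun x => θ x - B / r * Real.arctan (r * x) with hF
  have hFd : ∀ x, HasDerivAt F (v x - B / (1 + (r * x) ^ 2)) x := by
    intro x
    have h1 : HasDerivAt (fun s : ℝ => r * s) r x := by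
      simpa using (hasDerivAt_id x).const_mul r
    refine ((hθ x).sub (h1.arctan.const_mul (B / r))).congr_deriv ?_
    have : 1 + (r * x) ^ 2 ≠ 0 := by positivity
    field_simp
  have hanti : Antitone F := antitone_of_deriv_nonpos (fun x => (hFd x).differentiableAt)
    (fun x => by rw [(hFd x).deriv]; linarith [hv x])
  have hFbot : Tendsto F atBot (𝓝 (l - B / r * (-(Real.pi / 2)))) :=
    hbot.sub ((tendsto_nhds_of_tendsto_nhdsWithin
      (Real.tendsto_arctan_atBot.comp (tendsto_id.const_mul_atBot hr))).const_mul _)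
  have hFtop : Tendsto F atTop (𝓝 (l' - B / r * (Real.pi / 2))) :=
    htop.sub ((tendsto_nhds_of_tendsto_nhdsWithin
      (Real.tendsto_arctan_atTop.comp (tendsto_id.const_mul_atTop hr))).const_mul _)
  have h1 := hanti.ge_of_tendsto hFbot 0
  have h2 := hanti.le_of_tendsto hFtop 0
  linarith

/-- The lower bound for given bounds `m ≤ A ≤ M` on the diffusion coefficient along the wave, with
`r = 1 / (2 √M)` represented by `4 M r² = 1`. -/
lemma lower_bound {A θ v : ℝ → ℝ} {m M r l l' : ℝ} (hm : 0 < m) (hr : 0 < r)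
    (hrM : 4 * M * r ^ 2 = 1) (hAm : ∀ x, m ≤ A x) (hAM : ∀ x, A x ≤ M)
    (hθ : ∀ x, HasDerivAt θ (v x) x) (hv : ∀ x, 0 ≤ v x)
    (hu : ∀ x, HasDerivAt (fun s => A s * v s) (-(x / 2) * v x) x)
    (hbot : Tendsto θ atBot (𝓝 l)) (htop : Tendsto θ atTop (𝓝 l')) (x : ℝ) :
    (m * r / (Real.pi * M)) * Real.exp (-(x ^ 2 / (4 * m))) * (l' - l) ≤ v x := by
  have hM : 0 < M := hm.trans_le ((hAm 0).trans (hAM 0))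
  have hup : ∀ y, v y ≤ (A 0 * v 0 / m) / (1 + (r * y) ^ 2) := by
    intro y
    have h := flux_le (K := r ^ 2) hu hv (fun z => by nlinarith [hAM z, sq_nonneg r]) y
    have he : 1 + (r * y) ^ 2 ≤ Real.exp (r ^ 2 * y ^ 2) := by
      have := Real.add_one_le_exp (r ^ 2 * y ^ 2)
      nlinarith
    rw [div_div, le_div_iff₀ (by positivity)]
    have h1 : m * v y * (1 + (r * y) ^ 2) ≤ A y * v y * Real.exp (r ^ 2 * y ^ 2) :=
      mul_le_mul (mul_le_mul_of_nonneg_right (hAm y) (hv y)) he (by positivity)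
        (mul_nonneg (hm.le.trans (hAm y)) (hv y))
    linarith
  have hinc := increment_le hr hθ hup hbot htop
  have hlow := le_flux (K := 1 / (4 * m)) hu hv (fun z => by
    have : 2 * (1 / (4 * m)) * A z = A z / m / 2 := by field_simp; norm_num
    rw [this]
    have : 1 ≤ A z / m := (one_le_div hm).2 (hAm z)
    linarith) x
  have hpi := Real.pi_pos
  have h3 : m * r / Real.pi * (l' - l) ≤ A 0 * v 0 := by
    calc m * r / Real.pi * (l' - l) ≤ m * r / Real.pi * (A 0 * v 0 / m / r * Real.pi) := by
          gcongr
      _ = A 0 * v 0 := by field_simp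
  have h4 : m * r / Real.pi * (l' - l) ≤ M * v x * Real.exp (1 / (4 * m) * x ^ 2) :=
    h3.trans (hlow.trans (by
      have := hAM x
      have := hv x
      gcongr))
  have h5 : Real.exp (1 / (4 * m) * x ^ 2) * Real.exp (-(x ^ 2 / (4 * m))) = 1 := by
    rw [← Real.exp_add, Real.exp_eq_one_iff]
    ring
  calc (m * r / (Real.pi * M)) * Real.exp (-(x ^ 2 / (4 * m))) * (l' - l)
      = (m * r / Real.pi * (l' - l)) * (Real.exp (-(x ^ 2 / (4 * m))) / M) := by
        field_simp
    _ ≤ (M * v x * Real.exp (1 / (4 * m) * x ^ 2)) * (Real.exp (-(x ^ 2 / (4 * m))) / M) := by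
        gcongr
    _ = v x * (Real.exp (1 / (4 * m) * x ^ 2) * Real.exp (-(x ^ 2 / (4 * m)))) := by
        field_simp
    _ = v x := by rw [h5, mul_one]

end DiffusionWave

/-- Uniform lower bound for the derivative of the diffusion wave on parabolic regions
(estimate (2.47)): for `θ₋ < θ₊` with `δ = θ₊ − θ₋` sufficiently small and `θ̂` the
monotonically increasing self-similar solution of `(a(θ̂)θ̂')' + (η/2)θ̂' = 0` with
`θ̂(∓∞) = θ∓`, for every `η₀ > 0` there is `c_{η₀} > 0` independent of `δ` with
`θ̂'(η) > c_{η₀} δ` for `|η| ≤ η₀`; moreover `c_{η₀} → 0` as `η₀ → +∞`. -/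
theorem diffusion_wave_deriv_lower_bound
    (a : ℝ → ℝ) (ha : ContDiffOn ℝ (⊤ : ℕ∞) a (Set.Ioi 0)) (hapos : ∀ θ : ℝ, 0 < θ → 0 < a θ)
    (θm : ℝ) (hθm : 0 < θm) :
    ∃ δ₀ : ℝ, 0 < δ₀ ∧ ∃ c : ℝ → ℝ, Tendsto c atTop (nhds 0) ∧
      ∀ η₀ : ℝ, 0 < η₀ → 0 < c η₀ ∧
        ∀ δ : ℝ, 0 < δ → δ ≤ δ₀ →
          ∀ θhat : ℝ → ℝ, ContDiff ℝ 2 θhat → StrictMono θhat →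
            Tendsto θhat atBot (nhds θm) → Tendsto θhat atTop (nhds (θm + δ)) →
            (∀ η : ℝ, deriv (fun s => a (θhat s) * deriv θhat s) η
                + (η / 2) * deriv θhat η = 0) →
            ∀ η : ℝ, |η| ≤ η₀ → c η₀ * δ < deriv θhat η := by
  have hsub : Icc θm (θm + 1) ⊆ Ioi 0 := fun x hx => lt_of_lt_of_le hθm hx.1
  have hne : (Icc θm (θm + 1)).Nonempty := nonempty_Icc.2 (by linarith)
  have hcont : ContinuousOn a (Icc θm (θm + 1)) := ha.continuousOn.mono hsub
  obtain ⟨p, hp, hpmin⟩ := isCompact_Icc.exists_isMinOn hne hcont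
  obtain ⟨q, hq, hqmax⟩ := isCompact_Icc.exists_isMaxOn hne hcont
  have hm : 0 < a p := hapos p (hsub hp)
  have hM : 0 < a q := hapos q (hsub hq)
  obtain ⟨r, hr, hrM⟩ : ∃ r : ℝ, 0 < r ∧ 4 * a q * r ^ 2 = 1 := by
    refine ⟨√(1 / (4 * a q)), by positivity, ?_⟩
    rw [Real.sq_sqrt (by positivity)]
    field_simp
  have hpi := Real.pi_pos
  have hC : 0 < a p * r / (Real.pi * a q) := by positivity
  -- The factor `1 / 2` makes the final inequality strict.
  refine ⟨1, one_pos, fun η₀ => a p * r / (Real.pi * a q) / 2 * Real.exp (-(η₀ ^ 2 / (4 * a p))),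
    ?_, fun η₀ hη₀ => ⟨by positivity, ?_⟩⟩
  · have h : Tendsto (fun x : ℝ => x ^ 2 / (4 * a p)) atTop atTop :=
      (tendsto_pow_atTop two_ne_zero).atTop_div_const (by positivity)
    simpa using (Real.tendsto_exp_neg_atTop_nhds_zero.comp h).const_mul
      (a p * r / (Real.pi * a q) / 2)
  intro δ hδ hδ1 θ hθ hmono hbot htop hode η hη
  have hmem : ∀ x, θ x ∈ Icc θm (θm + 1) := fun x =>
    ⟨hmono.monotone.le_of_tendsto hbot x,
      (hmono.monotone.ge_of_tendsto htop x).trans (by linarith)⟩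
  have hθd : Differentiable ℝ θ := hθ.differentiable (by norm_num)
  have hθ'd : Differentiable ℝ (deriv θ) := by
    have h2 : ContDiff ℝ (1 + 1) θ := by
      have : (1 + 1 : WithTop ℕ∞) = 2 := by norm_num
      rw [this]; exact hθ
    exact (contDiff_succ_iff_deriv.1 h2).2.2.differentiable (by norm_num)
  have hu : ∀ x, HasDerivAt (fun s => a (θ s) * deriv θ s) (-(x / 2) * deriv θ x) x := by
    intro x
    have ha' : DifferentiableAt ℝ a (θ x) :=
      (ha.differentiableOn (by simp)).differentiableAt (Ioi_mem_nhds (hsub (hmem x)))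
    have hd : DifferentiableAt ℝ (fun s => a (θ s) * deriv θ s) x :=
      (ha'.comp x (hθd x)).mul (hθ'd x)
    refine hd.hasDerivAt.congr_deriv ?_
    linarith [hode x]
  have key := DiffusionWave.lower_bound (A := fun s => a (θ s)) hm hr hrM
    (fun x => hpmin (hmem x)) (fun x => hqmax (hmem x)) (fun x => (hθd x).hasDerivAt)
    (fun x => hmono.monotone.deriv_nonneg) hu hbot htop η
  have hsq : η ^ 2 ≤ η₀ ^ 2 := sq_le_sq' (abs_le.1 hη).1 (abs_le.1 hη).2
  refine lt_of_lt_of_le ?_ key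
  rw [add_sub_cancel_left]
  have hexp : Real.exp (-(η₀ ^ 2 / (4 * a p))) ≤ Real.exp (-(η ^ 2 / (4 * a p))) := by
    gcongr
  refine mul_lt_mul_of_pos_right ?_ hδ
  exact mul_lt_mul (half_lt_self hC) hexp (Real.exp_pos _) hC.le
end

section
/- Non-negativity of the diagonalized viscosity matrix. Let v̄ > 0, p₊ = 2/3, λ₃ = √(5p₊/(3v̄)), let L and R be the matrices of left and right eigenvectors of A₁ defined below, and let A₂ = diag(0, 4μ/(3v̄), κ/v̄) with constants μ > 0 and κ > 0. Then the matrix A₄ = L A₂ R is symmetric and positive semidefinite: zᵗ A₄ z ≥ 0 for all z ∈ ℝ³. -/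
/-!
Since `λ₃ · 5/(3λ₃) = 5/3` and `p₊ = 2/3`, the second and third columns of `L` are positive multiples
of the corresponding rows of `R`. The first diagonal entry of `A₂` vanishes, so `A₄ = L A₂ R` is
a combination `(2μ/3v̄) e eᵗ + (2κ/3v̄) w wᵗ` of two rank-one symmetric matrices with positive
coefficients, where `e = (-1, 0, 1)` and `w = (√(3/10), (3/2)√(2/5), √(3/10))`. Hence
`zᵗ A₄ z = (2μ/3v̄)(e·z)² + (2κ/3v̄)(w·z)² ≥ 0`.
-/

open Matrix

/-- Non-negativity of the diagonalized viscosity matrix: with `L, R` the matrices of left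
and right eigenvectors of `A₁` and `A₂ = diag(0, 4μ/(3v̄), κ/v̄)` with `μ, κ > 0`, the
matrix `A₄ = L A₂ R` is symmetric and positive semidefinite. -/
theorem diagonalized_viscosity_matrix_psd (v μ κ : ℝ) (hv : 0 < v) (hμ : 0 < μ) (hκ : 0 < κ)
    (p l3 : ℝ) (hp : p = 2 / 3) (hl3 : l3 = Real.sqrt (5 * p / (3 * v)))
    (L R A2 A4 : Matrix (Fin 3) (Fin 3) ℝ)
    (hL : L = !![-Real.sqrt (3 / 10), -Real.sqrt (3 / 10) * (5 / (3 * l3)),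
                    Real.sqrt (3 / 10) * (2 / (3 * p));
                 Real.sqrt (2 / 5), 0, Real.sqrt (2 / 5) * (1 / p);
                 -Real.sqrt (3 / 10), Real.sqrt (3 / 10) * (5 / (3 * l3)),
                    Real.sqrt (3 / 10) * (2 / (3 * p))])
    (hR : R = !![-Real.sqrt (3 / 10), Real.sqrt (2 / 5), -Real.sqrt (3 / 10);
                 -Real.sqrt (3 / 10) * l3, 0, Real.sqrt (3 / 10) * l3;
                 Real.sqrt (3 / 10) * p, Real.sqrt (2 / 5) * ((3 / 2) * p),
                    Real.sqrt (3 / 10) * p])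
    (hA2 : A2 = Matrix.diagonal ![0, 4 * μ / (3 * v), κ / v])
    (hA4 : A4 = L * A2 * R) :
    A4ᵀ = A4 ∧ ∀ z : Fin 3 → ℝ, 0 ≤ z ⬝ᵥ A4.mulVec z := by
  have hl : l3 ≠ 0 := by
    rw [hl3, hp]
    positivity
  have hc : 5 / (3 * l3) * l3 = 5 / 3 := by field_simp
  subst hp
  clear hl3
  have hs : √(3 / 10 : ℝ) ^ 2 = 3 / 10 := Real.sq_sqrt (by norm_num)
  -- Column `j` of `L` is a positive multiple of row `j` of `R` for `j = 2, 3`.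
  have key : A4 = (2 * μ / (3 * v)) • vecMulVec ![-1, 0, 1] ![-1, 0, 1]
      + (2 * κ / (3 * v)) • vecMulVec ![√(3 / 10), 3 / 2 * √(2 / 5), √(3 / 10)]
          ![√(3 / 10), 3 / 2 * √(2 / 5), √(3 / 10)] := by
    subst hA4 hL hR hA2
    generalize √(3 / 10 : ℝ) = s at *
    generalize √(2 / 5 : ℝ) = t at *
    generalize 5 / (3 * l3) = c at *
    have hcs : s ^ 2 * (c * l3) = 1 / 2 := by rw [hs, hc]; norm_num
    ext i j
    fin_cases i <;> fin_cases j <;>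
      simp [Matrix.mul_apply, Fin.sum_univ_three, vecMul_diagonal]
    · linear_combination (4 * μ / (3 * v)) * hcs
    · ring
    · linear_combination -(4 * μ / (3 * v)) * hcs
    · ring
    · ring
    · ring
    · linear_combination -(4 * μ / (3 * v)) * hcs
    · ring
    · linear_combination (4 * μ / (3 * v)) * hcs
  have hquad (w z : Fin 3 → ℝ) : z ⬝ᵥ (vecMulVec w w) *ᵥ z = (w ⬝ᵥ z) ^ 2 := by
    simp [vecMulVec_mulVec, dotProduct_comm z w, sq]
  rw [key]
  refine ⟨by simp only [transpose_add, transpose_smul, transpose_vecMulVec], fun z => ?_⟩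
  rw [add_mulVec, smul_mulVec, smul_mulVec, dotProduct_add, dotProduct_smul, dotProduct_smul,
    hquad, hquad, smul_eq_mul, smul_eq_mul]
  positivity
end
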